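/- Let D = (V, A) be a digraph and X ⊆ V a set with |out_D(X)| < |in_D(X)|. Then there is a weakly connected component of the induced subdigraph D[V ∖ X], with vertex set Y, such that |in_D(Y)| < |out_D(Y)|. -/

import Mathlib

/-!
The weakly connected components `Y` of `D[V ∖ X]` partition `V ∖ X`, and no arc runs between two
of them, so an arc leaving (entering) a component enters (leaves) `X`. Hence `in(X)` is the disjoint
union of the sets `out(Y)` and `out(X)` is the disjoint union of the sets `in(Y)`. If
`|out(Y)| ≤ |in(Y)|` held for every `Y`, summing over the components would give
`|in(X)| ≤ |out(X)|`.
-/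

/-- The set of arcs of `A` going out of the vertex set `X`. -/
def outArcs {V : Type*} (A : Set (V × V)) (X : Set V) : Set (V × V) :=
  {e ∈ A | e.1 ∈ X ∧ e.2 ∉ X}

/-- The set of arcs of `A` going into the vertex set `X`. -/
def inArcs {V : Type*} (A : Set (V × V)) (X : Set V) : Set (V × V) :=
  {e ∈ A | e.1 ∉ X ∧ e.2 ∈ X}

/-- A digraph (given by its arc set `A`) is balanced if for each vertex set the
cardinalities of the ingoing and the outgoing arcs coincide. -/
def IsBalanced {V : Type*} (A : Set (V × V)) : Prop :=
  ∀ X : Set V, Cardinal.mk (inArcs A X) = Cardinal.mk (outArcs A X)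

/-- `C` is (the arc set of) a directed cycle of the digraph with arc set `A`. -/
def IsDicycle {V : Type*} (A : Set (V × V)) (C : Set (V × V)) : Prop :=
  ∃ (n : ℕ) (f : ZMod n → V), 2 ≤ n ∧ Function.Injective f ∧
    C = {p | ∃ i : ZMod n, p = (f i, f (i + 1))} ∧ C ⊆ A

/-- `P` is a partition of the arc set `A` into dicycles. -/
def IsDicyclePartition {V : Type*} (A : Set (V × V)) (P : Set (Set (V × V))) : Prop :=
  (∀ C ∈ P, IsDicycle A C) ∧ P.PairwiseDisjoint id ∧ ⋃₀ P = A

/-- Adjacency in the underlying undirected graph of the subdigraph of `A`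
induced by the vertex set `S`. -/
def AdjOn {V : Type*} (A : Set (V × V)) (S : Set V) (u v : V) : Prop :=
  u ∈ S ∧ v ∈ S ∧ ((u, v) ∈ A ∨ (v, u) ∈ A)

/-- Reachability in the underlying undirected graph of the subdigraph of `A`
induced by the vertex set `S`. -/
def ReachOn {V : Type*} (A : Set (V × V)) (S : Set V) : V → V → Prop :=
  Relation.ReflTransGen (AdjOn A S)

/-- `Y` is the vertex set of a weakly connected component of the subdigraph of
`A` induced by the vertex set `S`. -/
def IsWeakComponent {V : Type*} (A : Set (V × V)) (S : Set V) (Y : Set V) : Prop :=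
  ∃ y ∈ S, Y = {v | ReachOn A S y v}

/-- The subdigraph of `A` induced by the vertex set `X` is weakly connected. -/
def IsWeaklyConnectedOn {V : Type*} (A : Set (V × V)) (X : Set V) : Prop :=
  X.Nonempty ∧ ∀ u ∈ X, ∀ v ∈ X, ReachOn A X u v

open Cardinal Function Set

section Arcs

variable {V : Type*} (A : Set (V × V))

theorem outArcs_compl (X : Set V) : outArcs A Xᶜ = inArcs A X := by
  simp only [outArcs, inArcs, mem_compl_iff, not_not]

theorem inArcs_compl (X : Set V) : inArcs A Xᶜ = outArcs A X := by
  rw [← outArcs_compl, compl_compl]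

theorem pairwise_disjoint_outArcs {ι : Type*} {Y : ι → Set V} (hY : Pairwise (Disjoint on Y)) :
    Pairwise (Disjoint on fun i => outArcs A (Y i)) := fun _ _ hij =>
  ((hY hij).preimage Prod.fst).mono (fun _ he => he.2.1) fun _ he => he.2.1

theorem pairwise_disjoint_inArcs {ι : Type*} {Y : ι → Set V} (hY : Pairwise (Disjoint on Y)) :
    Pairwise (Disjoint on fun i => inArcs A (Y i)) := fun _ _ hij =>
  ((hY hij).preimage Prod.snd).mono (fun _ he => he.2.2) fun _ he => he.2.2

end Arcs

/-- The family of vertex sets `Y` is arc-separated: no arc of `A` runs between members with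
different indices. The members are not required to be disjoint or to cover all vertices. -/
def ArcSeparated {V ι : Type*} (A : Set (V × V)) (Y : ι → Set V) : Prop :=
  ∀ ⦃i j : ι⦄ ⦃u v : V⦄, u ∈ Y i → v ∈ Y j → (u, v) ∈ A → i = j

namespace ArcSeparated

variable {V ι : Type*} {A : Set (V × V)} {Y : ι → Set V}

theorem outArcs_iUnion (hA : ArcSeparated A Y) :
    outArcs A (⋃ i, Y i) = ⋃ i, outArcs A (Y i) := by
  ext ⟨u, v⟩
  simp only [outArcs, mem_iUnion, mem_ofPred_eq]
  constructor
  · rintro ⟨huv, ⟨i, hu⟩, hv⟩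
    exact ⟨i, huv, hu, fun hvi => hv ⟨i, hvi⟩⟩
  · rintro ⟨i, huv, hu, hv⟩
    refine ⟨huv, ⟨i, hu⟩, ?_⟩
    rintro ⟨j, hvj⟩
    obtain rfl := hA hu hvj huv
    exact hv hvj

theorem inArcs_iUnion (hA : ArcSeparated A Y) :
    inArcs A (⋃ i, Y i) = ⋃ i, inArcs A (Y i) := by
  ext ⟨u, v⟩
  simp only [inArcs, mem_iUnion, mem_ofPred_eq]
  constructor
  · rintro ⟨huv, hu, i, hv⟩
    exact ⟨i, huv, fun hui => hu ⟨i, hui⟩, hv⟩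
  · rintro ⟨i, huv, hu, hv⟩
    refine ⟨huv, ?_, i, hv⟩
    rintro ⟨j, huj⟩
    obtain rfl := hA huj hv huv
    exact hu huj

theorem exists_mk_inArcs_lt_mk_outArcs (hA : ArcSeparated A Y) (hY : Pairwise (Disjoint on Y))
    (h : #(inArcs A (⋃ i, Y i)) < #(outArcs A (⋃ i, Y i))) :
    ∃ i, #(inArcs A (Y i)) < #(outArcs A (Y i)) := by
  by_contra! hle
  refine h.not_ge (lift_le.mp ?_)
  calc lift #(outArcs A (⋃ i, Y i))
      = Cardinal.sum fun i => #(outArcs A (Y i)) := by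
        rw [hA.outArcs_iUnion, mk_iUnion_eq_sum_mk_lift (pairwise_disjoint_outArcs A hY)]
    _ ≤ Cardinal.sum fun i => #(inArcs A (Y i)) := sum_le_sum _ _ hle
    _ = lift #(inArcs A (⋃ i, Y i)) := by
        rw [hA.inArcs_iUnion, mk_iUnion_eq_sum_mk_lift (pairwise_disjoint_inArcs A hY)]

end ArcSeparated

section Components

variable {V : Type*} {A : Set (V × V)} {S Y Z : Set V} {u v : V}

instance AdjOn.stdSymm : Std.Symm (AdjOn A S) where
  symm _ _ h := ⟨h.2.1, h.1, h.2.2.symm⟩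

theorem ReachOn.symm (h : ReachOn A S u v) : ReachOn A S v u :=
  Relation.ReflTransGen.stdSymm.symm u v h

theorem ReachOn.mem (h : ReachOn A S u v) (hu : u ∈ S) : v ∈ S := by
  induction h with
  | refl => exact hu
  | tail _ hadj _ => exact hadj.2.1

namespace IsWeakComponent

theorem subset (hY : IsWeakComponent A S Y) : Y ⊆ S := by
  obtain ⟨y, hy, rfl⟩ := hY
  exact fun _ hv => hv.mem hy

theorem eq_setOf_reachOn (hY : IsWeakComponent A S Y) (hu : u ∈ Y) :
    Y = {v | ReachOn A S u v} := by
  obtain ⟨y, -, rfl⟩ := hY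
  ext v
  exact ⟨hu.symm.trans, hu.trans⟩

theorem eq_of_reachOn (hY : IsWeakComponent A S Y) (hZ : IsWeakComponent A S Z)
    (hu : u ∈ Y) (hv : v ∈ Z) (h : ReachOn A S u v) : Y = Z := by
  have hvY : v ∈ Y := (hY.eq_setOf_reachOn hu).symm ▸ h
  rw [hY.eq_setOf_reachOn hvY, hZ.eq_setOf_reachOn hv]

end IsWeakComponent

variable (A S)

theorem iUnion_isWeakComponent : ⋃ Y : {Y // IsWeakComponent A S Y}, (Y : Set V) = S :=
  Subset.antisymm (iUnion_subset fun Y => Y.2.subset) fun v hv =>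
    mem_iUnion.mpr ⟨⟨{w | ReachOn A S v w}, v, hv, rfl⟩, .refl⟩

theorem pairwise_disjoint_isWeakComponent :
    Pairwise (Disjoint on fun Y : {Y // IsWeakComponent A S Y} => (Y : Set V)) :=
  fun Y Z hYZ => disjoint_left.mpr fun _ hY hZ =>
    hYZ (Subtype.ext (Y.2.eq_of_reachOn Z.2 hY hZ .refl))

theorem arcSeparated_isWeakComponent :
    ArcSeparated A fun Y : {Y // IsWeakComponent A S Y} => (Y : Set V) :=
  fun Y Z _ _ hu hv huv => Subtype.ext <|
    Y.2.eq_of_reachOn Z.2 hu hv (.single ⟨Y.2.subset hu, Z.2.subset hv, .inl huv⟩)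

end Components

/-- If `X` is overloaded in a loop-free digraph, then some weakly connected
component `Y` of the subdigraph induced on the complement of `X` satisfies
`|in(Y)| < |out(Y)|`. -/
theorem exists_component_of_compl_with_more_out {V : Type*}
    (A : Set (V × V)) (hA : ∀ e ∈ A, e.1 ≠ e.2) (X : Set V)
    (hX : Cardinal.mk (outArcs A X) < Cardinal.mk (inArcs A X)) :
    ∃ Y : Set V, IsWeakComponent A Xᶜ Y ∧
      Cardinal.mk (inArcs A Y) < Cardinal.mk (outArcs A Y) := by
  have hXc : #(inArcs A Xᶜ) < #(outArcs A Xᶜ) := by rwa [inArcs_compl, outArcs_compl]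
  obtain ⟨⟨Y, hY⟩, hlt⟩ :=
    (arcSeparated_isWeakComponent A Xᶜ).exists_mk_inArcs_lt_mk_outArcs
      (pairwise_disjoint_isWeakComponent A Xᶜ) (by rwa [iUnion_isWeakComponent])
  exact ⟨Y, hY, hlt⟩
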